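/- arXiv:0712.2837 — 8 statements merged into one kernel-verified Lean document; each statement's English description precedes it below -/
import Mathlib

section
/- Let n ≥ 2 and let w₁, …, w_k : Fin n → ℚ be a linearly independent family of sum-zero weighting vectors. Then for any choice of sum-zero results vectors r₁, …, r_k : Fin n → ℚ, the set of full-ranking profiles p : Equiv.Perm (Fin n) → ℚ satisfying T_{w_i}(p) = r_i for all 1 ≤ i ≤ k is infinite. -/
/-- The positional voting map: `T_w(p)(c) = Σ_σ p(σ) · w(σ⁻¹ c)`. -/
noncomputable def positionalOutcome (n : ℕ) (w : Fin n → ℚ)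
    (p : Equiv.Perm (Fin n) → ℚ) : Fin n → ℚ :=
  fun c => ∑ σ : Equiv.Perm (Fin n), p σ * w (σ⁻¹ c)

/-!
If the ballot `σ` ranks `c` in position `i` and `d` in position `j`, then adding one copy of `σ`
and removing one copy of the ballot obtained by exchanging `c` and `d` changes the outcome by
`(w i - w j) • (e_c - e_d)`. Summing over `j` and dividing by the number of candidates yields, for
sum-zero `w`, the outcome `w i • (e_c - e_d)`. The differences `e_c - e_d` span the sum-zero
vectors, so every linear map `A` with sum-zero values is realized by a single profile `p`, in the
sense that `T_w(p) = A w` for all sum-zero `w`. Linear independence provides an `A` with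
`A w_i = r_i`, and constant profiles may be added to `p` freely.
-/

open Equiv

theorem exists_linearMap_apply_eq_of_linearIndependent {ι K V W : Type*} [DivisionRing K]
    [AddCommGroup V] [Module K V] [AddCommGroup W] [Module K W] {v : ι → V}
    (hv : LinearIndependent K v) (u : ι → W) : ∃ A : V →ₗ[K] W, ∀ i, A (v i) = u i := by
  obtain ⟨g, hg⟩ := LinearMap.exists_leftInverse_of_injective (Finsupp.linearCombination K v)
    (LinearMap.ker_eq_bot.2 hv)
  refine ⟨Finsupp.linearCombination K u ∘ₗ g, fun i => ?_⟩
  have hgv : g (v i) = Finsupp.single i 1 := by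
    simpa using LinearMap.congr_fun hg (Finsupp.single i 1)
  simp [hgv]

section SumZero

variable (R α : Type*) [Ring R] [Fintype α]

/-- The submodule of sum-zero vectors indexed by `α`, to which the weighting vectors and the
results vectors belong. -/
def sumZero : Submodule R (α → R) :=
  LinearMap.ker (∑ c, LinearMap.proj c : (α → R) →ₗ[R] R)

variable {R α}

theorem mem_sumZero {v : α → R} : v ∈ sumZero R α ↔ ∑ c, v c = 0 := by
  simp [sumZero]

theorem sum_sub_eq_card_mul_of_mem_sumZero {w : α → R} (hw : w ∈ sumZero R α) (i : α) :
    ∑ j, (w i - w j) = Fintype.card α * w i := by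
  simp [Finset.sum_sub_distrib, mem_sumZero.1 hw]

theorem sum_smul_single_sub_single_of_mem_sumZero [DecidableEq α] {r : α → R}
    (hr : r ∈ sumZero R α) (d : α) :
    ∑ c, r c • (Pi.single c 1 - Pi.single d 1 : α → R) = r := by
  rw [Finset.sum_congr rfl fun c _ => smul_sub _ _ _, Finset.sum_sub_distrib, ← Finset.sum_smul,
    mem_sumZero.1 hr, zero_smul, sub_zero, ← pi_eq_sum_univ']

end SumZero

section PositionalMap

variable {R α : Type*} [CommRing R] [Fintype α] [DecidableEq α]

/-- The positional voting map `T_w` for an arbitrary finite set `α` of candidates and scores in a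
commutative ring, as a linear map: each ballot `σ` contributes the vector `w ∘ σ⁻¹`. Positions are
indexed by `α` as well, so that ballots are permutations. -/
noncomputable def positionalMap (w : α → R) : (Perm α → R) →ₗ[R] (α → R) :=
  Fintype.linearCombination R fun σ : Perm α => w ∘ ⇑σ⁻¹

theorem positionalMap_apply (w : α → R) (p : Perm α → R) (c : α) :
    positionalMap w p c = ∑ σ, p σ * w (σ⁻¹ c) := by
  simp [positionalMap, Fintype.linearCombination_apply]

theorem positionalMap_single (w : α → R) (σ : Perm α) :
    positionalMap w (Pi.single σ 1) = w ∘ ⇑σ⁻¹ := by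
  simp [positionalMap, Fintype.linearCombination_apply_single]

theorem positionalMap_const_eq_zero (hcard : IsUnit (Fintype.card α : R)) {w : α → R}
    (hw : w ∈ sumZero R α) (t : R) : positionalMap w (Function.const _ t) = 0 := by
  have outcome_eq (c d : α) :
      positionalMap w (Function.const _ t) d = positionalMap w (Function.const _ t) c := by
    simp only [positionalMap_apply, Function.const_apply]
    exact Fintype.sum_equiv (Equiv.mulLeft (swap c d)) _ _ fun σ => by simp
  have sum_outcome : ∑ d, positionalMap w (Function.const _ t) d = 0 := by
    simp only [positionalMap_apply, Function.const_apply]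
    rw [Finset.sum_comm]
    refine Finset.sum_eq_zero fun σ _ => ?_
    rw [← Finset.mul_sum, Equiv.sum_comp σ⁻¹ w, mem_sumZero.1 hw, mul_zero]
  ext c
  refine hcard.mul_left_cancel ?_
  rw [Finset.sum_congr rfl fun d _ => outcome_eq c d] at sum_outcome
  simpa using sum_outcome

theorem positionalMap_single_sub_single_mul_swap (w : α → R) (σ : Perm α) (i j : α) :
    positionalMap w (Pi.single σ 1 - Pi.single (σ * swap i j) 1) =
      (w i - w j) • (Pi.single (σ i) 1 - Pi.single (σ j) 1) := by
  rw [map_sub, positionalMap_single, positionalMap_single]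
  ext c
  obtain ⟨m, rfl⟩ := σ.surjective c
  suffices w m - w (swap i j m) = (w i - w j) * (Pi.single i 1 - Pi.single j 1 : α → R) m by
    simpa [Pi.single_apply] using this
  rcases eq_or_ne m i with rfl | hmi
  · rcases eq_or_ne m j with rfl | hmj <;> simp [*]
  · rcases eq_or_ne m j with rfl | hmj
    · simp [hmi]
    · simp [swap_apply_of_ne_of_ne, *]

theorem exists_positionalMap_eq_sub_smul (i j c d : α) :
    ∃ p : Perm α → R, ∀ w : α → R,
      positionalMap w p = (w i - w j) • (Pi.single c 1 - Pi.single d 1) := by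
  rcases eq_or_ne i j with rfl | hij
  · exact ⟨0, by simp⟩
  rcases eq_or_ne c d with rfl | hcd
  · exact ⟨0, by simp⟩
  obtain ⟨σ, rfl, rfl⟩ : ∃ σ : Perm α, σ i = c ∧ σ j = d :=
    MulAction.is_two_pretransitive_iff.1 (Perm.isMultiplyPretransitive α 2) hij hcd
  exact ⟨_, fun w => positionalMap_single_sub_single_mul_swap w σ i j⟩

theorem exists_positionalMap_eq_smul_single_sub_single (hcard : IsUnit (Fintype.card α : R))
    (i c d : α) :
    ∃ p : Perm α → R, ∀ w ∈ sumZero R α,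
      positionalMap w p = w i • (Pi.single c 1 - Pi.single d 1) := by
  choose p hp using fun j => exists_positionalMap_eq_sub_smul (R := R) i j c d
  obtain ⟨u, hu⟩ := hcard.exists_left_inv
  refine ⟨u • ∑ j, p j, fun w hw => ?_⟩
  calc positionalMap w (u • ∑ j, p j)
      = u • (∑ j, (w i - w j)) • (Pi.single c 1 - Pi.single d 1) := by
        simp only [map_smul, map_sum, hp, Finset.sum_smul]
    _ = (u * Fintype.card α * w i) • (Pi.single c 1 - Pi.single d 1) := by
        rw [sum_sub_eq_card_mul_of_mem_sumZero hw, smul_smul, mul_assoc]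
    _ = w i • (Pi.single c 1 - Pi.single d 1) := by rw [hu, one_mul]

theorem exists_positionalMap_eq_smul (hcard : IsUnit (Fintype.card α : R)) (i : α) {r : α → R}
    (hr : r ∈ sumZero R α) :
    ∃ p : Perm α → R, ∀ w ∈ sumZero R α, positionalMap w p = w i • r := by
  choose p hp using fun c => exists_positionalMap_eq_smul_single_sub_single hcard i c i
  refine ⟨∑ c, r c • p c, fun w hw => ?_⟩
  calc positionalMap w (∑ c, r c • p c)
      = ∑ c, r c • w i • (Pi.single c 1 - Pi.single i 1) := by
        simp only [map_sum, map_smul, hp _ w hw]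
    _ = w i • ∑ c, r c • (Pi.single c 1 - Pi.single i 1) := by
        simp only [Finset.smul_sum, smul_comm (w i)]
    _ = w i • r := by rw [sum_smul_single_sub_single_of_mem_sumZero hr]

theorem exists_positionalMap_eq_linearMap (hcard : IsUnit (Fintype.card α : R))
    (A : (α → R) →ₗ[R] sumZero R α) :
    ∃ p : Perm α → R, ∀ w ∈ sumZero R α, positionalMap w p = A w := by
  choose p hp using fun i =>
    exists_positionalMap_eq_smul hcard i (A (Pi.single i 1)).property
  refine ⟨∑ i, p i, fun w hw => ?_⟩
  calc positionalMap w (∑ i, p i)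
      = ∑ i, w i • (A (Pi.single i 1) : α → R) := by simp only [map_sum, hp _ w hw]
    _ = A (∑ i, w i • Pi.single i 1) := by simp
    _ = A w := by rw [← pi_eq_sum_univ' w]

end PositionalMap

theorem positionalOutcome_eq_positionalMap (n : ℕ) (w : Fin n → ℚ) (p : Perm (Fin n) → ℚ) :
    positionalOutcome n w p = positionalMap w p :=
  funext fun c => (positionalMap_apply w p c).symm

theorem infinite_profiles_with_prescribed_results_general {ι K α : Type*} [Field K] [Infinite K]
    [Fintype α] [DecidableEq α] (hcard : (Fintype.card α : K) ≠ 0) {w : ι → α → K}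
    (hw : LinearIndependent K w) (hw0 : ∀ i, w i ∈ sumZero K α) {r : ι → α → K}
    (hr0 : ∀ i, r i ∈ sumZero K α) :
    {p : Perm α → K | ∀ i, positionalMap (w i) p = r i}.Infinite := by
  obtain ⟨A, hA⟩ := exists_linearMap_apply_eq_of_linearIndependent hw
    fun i => (⟨r i, hr0 i⟩ : sumZero K α)
  obtain ⟨p, hp⟩ := exists_positionalMap_eq_linearMap hcard.isUnit A
  refine Set.infinite_of_injective_forall_mem (f := fun t : K => p + Function.const _ t) ?_ ?_
  · exact (add_right_injective p).comp Function.const_injective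
  · intro t i
    rw [map_add, positionalMap_const_eq_zero hcard.isUnit (hw0 i), add_zero, hp _ (hw0 i), hA]

/-- For `n ≥ 2`, linearly independent sum-zero weighting vectors
`w₁, …, w_k` and arbitrary sum-zero results vectors `r₁, …, r_k`, there are
infinitely many full-ranking profiles `p` with `T_{w_i}(p) = r_i` for all `i`. -/
theorem infinite_profiles_with_prescribed_results (n k : ℕ) (hn : 2 ≤ n)
    (w : Fin k → (Fin n → ℚ)) (hw : LinearIndependent ℚ w)
    (hw0 : ∀ i, ∑ c, w i c = 0)
    (r : Fin k → (Fin n → ℚ)) (hr0 : ∀ i, ∑ c, r i c = 0) :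
    {p : Equiv.Perm (Fin n) → ℚ |
      ∀ i : Fin k, positionalOutcome n (w i) p = r i}.Infinite := by
  simpa only [positionalOutcome_eq_positionalMap] using
    infinite_profiles_with_prescribed_results_general (by simpa using (by omega : n ≠ 0)) hw
      (fun i => mem_sumZero.2 (hw0 i)) (fun i => mem_sumZero.2 (hr0 i))
end

section
/- Let n ≥ 2 and let λ : Fin m → ℕ be a partition of n (each λ(i) ≥ 1, λ weakly decreasing, Σ_i λ(i) = n). Let w₁, …, w_k : Fin m → ℚ be a linearly independent family of weighting vectors such that Σ_i λ(i)·w_t(i) = 0 for every t (i.e., each extension w̄_t is sum-zero). Then for any sum-zero results vectors r₁, …, r_k : Fin n → ℚ, the set of profiles p : {g : Fin n → Fin m | ∀ i, the fiber g⁻¹(i) has cardinality λ(i)} → ℚ satisfying, for all t and all candidates c, Σ_g p(g)·w_t(g(c)) = r_t(c), is infinite. -/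
/-- Tabloids of shape `λ`: functions `g : Fin n → Fin m` (assigning each candidate
its row) whose fiber over `i` has cardinality `λ i`. -/
def Tabloid (n m : ℕ) (lam : Fin m → ℕ) : Type :=
  {g : Fin n → Fin m // ∀ i, (Finset.univ.filter fun c => g c = i).card = lam i}

noncomputable instance (n m : ℕ) (lam : Fin m → ℕ) : Fintype (Tabloid n m lam) := by
  unfold Tabloid; infer_instance

/-!
Swapping two candidates `c` and `d` on a single ballot that puts them in rows `i` and `j` changes
the result of every weighting vector `w` by `w i - w j` times `e_c - e_d`. Since
`∑ j, λ j * w j = 0`, averaging over `j` yields the multiple `w i` itself, and by linear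
independence the rows `i` can be combined so that each `w_t` contributes a prescribed multiple
`s t`. The vectors `e_c - e_d` span the sum-zero vectors, so all prescribed results are attained.
By symmetry the constant profiles contribute nothing, so they can be added freely.
-/

section LinearAlgebra

/-- The vector `e_c - e_d`: one point is moved from candidate `d` to candidate `c`. It is zero when
`c = d`. -/
def pointTransfer (R : Type*) [Ring R] {α : Type*} [DecidableEq α] (c d : α) : α → R :=
  Pi.single c 1 - Pi.single d 1

theorem sub_comp_swap_eq_smul_pointTransfer {R α : Type*} [Ring R] [DecidableEq α]
    (f : α → R) (c d : α) :
    f - f ∘ Equiv.swap c d = (f c - f d) • pointTransfer R c d := by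
  funext x
  by_cases hxc : x = c <;> by_cases hxd : x = d <;>
    simp_all [pointTransfer, Equiv.swap_apply_of_ne_of_ne]

theorem eq_sum_smul_pointTransfer {R α : Type*} [Ring R] [Fintype α] [DecidableEq α]
    {f : α → R} (hf : ∑ x, f x = 0) (d : α) :
    f = ∑ c, f c • pointTransfer R c d := by
  simp only [pointTransfer, smul_sub, Finset.sum_sub_distrib, ← Finset.sum_smul, hf, zero_smul,
    sub_zero]
  exact pi_eq_sum_univ' f

theorem exists_sum_mul_eq_of_linearIndependent {K ι β : Type*} [Field K] [Fintype β]
    {w : ι → β → K} (hw : LinearIndependent K w) (s : ι → K) :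
    ∃ x : β → K, ∀ t, ∑ i, x i * w t i = s t := by
  classical
  obtain ⟨φ, hφ⟩ := LinearMap.exists_extend ((Module.Basis.span hw).constr K s)
  refine ⟨fun i ↦ φ (Pi.single i 1), fun t ↦ ?_⟩
  have hφw : φ (w t) = s t := by
    rw [← (Module.Basis.span hw).constr_basis K s t, ← hφ, LinearMap.comp_apply,
      Submodule.subtype_apply, Module.Basis.span_apply]
  calc ∑ i, φ (Pi.single i 1) * w t i
      = φ (∑ i, w t i • Pi.single i 1) := by simp only [map_sum, map_smul, smul_eq_mul, mul_comm]
    _ = s t := by rw [← pi_eq_sum_univ', hφw]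

theorem infinite_setOf_map_eq {R M N : Type*} [Ring R] [IsDomain R] [Infinite R] [AddCommGroup M]
    [Module R M] [Module.IsTorsionFree R M] [AddCommGroup N] [Module R N] (f : M →ₗ[R] N) {v : M}
    (hv : v ≠ 0) (hfv : f v = 0) (x : M) : {y | f y = f x}.Infinite :=
  Set.infinite_of_injective_forall_mem (f := fun q : R ↦ x + q • v)
    ((add_right_injective x).comp (smul_left_injective R hv)) fun q ↦ by simp [hfv]

end LinearAlgebra

namespace Tabloid

variable {n m : ℕ} {lam : Fin m → ℕ}

theorem nonempty_of_sum_eq (hlam : ∑ i, lam i = n) : Nonempty (Tabloid n m lam) := by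
  subst hlam
  refine ⟨fun c ↦ (finSigmaFinEquiv.symm c).1, fun i ↦ ?_⟩
  let fiberEquiv : {c // (finSigmaFinEquiv.symm c).1 = i} ≃ Fin (lam i) :=
    (finSigmaFinEquiv.symm.subtypeEquiv fun _ ↦ Iff.rfl).trans (Equiv.sigmaSubtype i)
  rw [← Fintype.card_subtype, Fintype.card_congr fiberEquiv, Fintype.card_fin]

/-- The action of a permutation of the candidates on tabloids by precomposition: candidate `c`
moves to the row of `σ c`. -/
def relabel (σ : Equiv.Perm (Fin n)) : Equiv.Perm (Tabloid n m lam) :=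
  (σ.symm.arrowCongr (Equiv.refl (Fin m))).subtypeEquiv fun g ↦ forall_congr' fun i ↦ by
    have card_fiber : (Finset.univ.filter fun c ↦ g (σ c) = i).card =
        (Finset.univ.filter fun c ↦ g c = i).card := Finset.card_equiv σ (by simp)
    simp [card_fiber]

@[simp]
theorem relabel_val (σ : Equiv.Perm (Fin n)) (g : Tabloid n m lam) :
    (relabel σ g).1 = g.1 ∘ σ :=
  rfl

theorem surjective_val (hlam : ∀ i, 1 ≤ lam i) (g : Tabloid n m lam) :
    Function.Surjective g.1 := fun i ↦ by
  obtain ⟨c, hc⟩ := Finset.card_pos.mp ((hlam i).trans_eq (g.2 i).symm)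
  exact ⟨c, (Finset.mem_filter.mp hc).2⟩

theorem exists_val_eq_and_val_eq (hlam : ∀ i, 1 ≤ lam i) (hsum : ∑ i, lam i = n) {c d : Fin n}
    (hcd : c ≠ d) {i j : Fin m} (hij : i ≠ j) :
    ∃ g : Tabloid n m lam, g.1 c = i ∧ g.1 d = j := by
  obtain ⟨g⟩ := nonempty_of_sum_eq hsum
  obtain ⟨c₀, rfl⟩ := g.surjective_val hlam i
  obtain ⟨d₀, rfl⟩ := g.surjective_val hlam j
  obtain ⟨σ, rfl, rfl⟩ := MulAction.is_two_pretransitive_iff.mp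
    (Equiv.Perm.isMultiplyPretransitive (Fin n) 2) hcd (ne_of_apply_ne g.1 hij)
  exact ⟨relabel σ g, rfl, rfl⟩

section Sums

variable {R : Type*} [Semiring R]

theorem sum_candidates_apply_val (g : Tabloid n m lam) (v : Fin m → R) :
    ∑ c, v (g.1 c) = ∑ i, (lam i : R) * v i := by
  rw [← Finset.sum_fiberwise' Finset.univ g.1 v]
  simp only [Finset.sum_const, g.2, nsmul_eq_mul]

theorem sum_tabloids_apply_val_congr (v : Fin m → R) (c d : Fin n) :
    ∑ g : Tabloid n m lam, v (g.1 c) = ∑ g : Tabloid n m lam, v (g.1 d) := by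
  rw [← Equiv.sum_comp (relabel (Equiv.swap c d))]
  simp

theorem sum_tabloids_apply_val_eq_zero [NoZeroDivisors R] (hn : (n : R) ≠ 0) {v : Fin m → R}
    (hv : ∑ i, (lam i : R) * v i = 0) (c : Fin n) :
    ∑ g : Tabloid n m lam, v (g.1 c) = 0 := by
  refine (mul_eq_zero.mp ?_).resolve_left hn
  calc (n : R) * ∑ g : Tabloid n m lam, v (g.1 c)
      = ∑ d : Fin n, ∑ g : Tabloid n m lam, v (g.1 d) := by
        simp [sum_tabloids_apply_val_congr v _ c]
    _ = ∑ g : Tabloid n m lam, ∑ d, v (g.1 d) := Finset.sum_comm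
    _ = 0 := by simp only [sum_candidates_apply_val, hv, Finset.sum_const_zero]

end Sums

section Results

variable {R ι : Type*} [Ring R] {w : ι → Fin m → R}

/-- The positional voting maps of a whole family of weighting vectors, applied to the same profile:
the result for `w t` is the `t`-th component. -/
noncomputable def results (lam : Fin m → ℕ) (w : ι → Fin m → R) :
    (Tabloid n m lam → R) →ₗ[R] ι → Fin n → R :=
  Fintype.linearCombination R fun g t c ↦ w t (g.1 c)

theorem results_apply (p : Tabloid n m lam → R) (t : ι) (c : Fin n) :
    results lam w p t c = ∑ g : Tabloid n m lam, p g * w t (g.1 c) := by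
  simp [results, Fintype.linearCombination_apply]

theorem results_one [NoZeroDivisors R] (hn : (n : R) ≠ 0)
    (hw₀ : ∀ t, ∑ i, (lam i : R) * w t i = 0) : results (n := n) lam w 1 = 0 := by
  funext t c
  simp [results_apply, sum_tabloids_apply_val_eq_zero hn (hw₀ t)]

theorem apply_val_mem_range_results (g : Tabloid n m lam) :
    (fun t c ↦ w t (g.1 c)) ∈ LinearMap.range (results (n := n) lam w) := by
  rw [results, Fintype.range_linearCombination]
  exact Submodule.subset_span ⟨g, rfl⟩

theorem sub_smul_pointTransfer_mem_range_results (hlam : ∀ i, 1 ≤ lam i) (hsum : ∑ i, lam i = n)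
    {c d : Fin n} (hcd : c ≠ d) (i j : Fin m) :
    (fun t ↦ (w t i - w t j) • pointTransfer R c d) ∈ LinearMap.range (results lam w) := by
  rcases eq_or_ne i j with rfl | hij
  · simp only [sub_self, zero_smul]
    exact zero_mem _
  obtain ⟨g, rfl, rfl⟩ := exists_val_eq_and_val_eq hlam hsum hcd hij
  convert sub_mem (apply_val_mem_range_results (w := w) g)
    (apply_val_mem_range_results (relabel (Equiv.swap c d) g)) using 1
  funext t
  exact (sub_comp_swap_eq_smul_pointTransfer (w t ∘ g.1) c d).symm

end Results

section Range

variable {K ι : Type*} [Field K] {w : ι → Fin m → K}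

theorem apply_smul_pointTransfer_mem_range_results (hn : (n : K) ≠ 0) (hlam : ∀ i, 1 ≤ lam i)
    (hsum : ∑ i, lam i = n) (hw₀ : ∀ t, ∑ i, (lam i : K) * w t i = 0) {c d : Fin n}
    (hcd : c ≠ d) (i : Fin m) :
    (fun t ↦ w t i • pointTransfer K c d) ∈ LinearMap.range (results lam w) := by
  have weighted_sum_sub (t : ι) : ∑ j, (lam j : K) * (w t i - w t j) = n * w t i := by
    simp only [mul_sub, Finset.sum_sub_distrib, hw₀, sub_zero, ← Finset.sum_mul, ← hsum,
      Nat.cast_sum]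
  rw [← Submodule.smul_mem_iff _ hn]
  convert Submodule.sum_mem _ fun j (_ : j ∈ Finset.univ) ↦ Submodule.smul_mem _ (lam j : K)
    (sub_smul_pointTransfer_mem_range_results (w := w) hlam hsum hcd i j) using 1
  funext t
  simp only [Pi.smul_apply, Finset.sum_apply, smul_smul, ← Finset.sum_smul, weighted_sum_sub]

theorem smul_pointTransfer_mem_range_results (hn : (n : K) ≠ 0) (hlam : ∀ i, 1 ≤ lam i)
    (hsum : ∑ i, lam i = n) (hw : LinearIndependent K w)
    (hw₀ : ∀ t, ∑ i, (lam i : K) * w t i = 0) (s : ι → K) (c d : Fin n) :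
    (fun t ↦ s t • pointTransfer K c d) ∈ LinearMap.range (results lam w) := by
  rcases eq_or_ne c d with rfl | hcd
  · simp only [pointTransfer, sub_self, smul_zero]
    exact zero_mem _
  obtain ⟨x, hx⟩ := exists_sum_mul_eq_of_linearIndependent hw s
  convert Submodule.sum_mem _ fun i (_ : i ∈ Finset.univ) ↦ Submodule.smul_mem _ (x i)
    (apply_smul_pointTransfer_mem_range_results hn hlam hsum hw₀ hcd i) using 1
  funext t
  simp only [Finset.sum_apply, Pi.smul_apply, smul_smul, ← Finset.sum_smul, hx]

theorem mem_range_results (hn : (n : K) ≠ 0) (hlam : ∀ i, 1 ≤ lam i) (hsum : ∑ i, lam i = n)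
    (hw : LinearIndependent K w) (hw₀ : ∀ t, ∑ i, (lam i : K) * w t i = 0)
    {r : ι → Fin n → K} (hr : ∀ t, ∑ c, r t c = 0) :
    r ∈ LinearMap.range (results lam w) := by
  have : NeZero n := ⟨fun h ↦ hn (by simp [h])⟩
  convert Submodule.sum_mem _ fun c (_ : c ∈ Finset.univ) ↦
    smul_pointTransfer_mem_range_results hn hlam hsum hw hw₀ (r · c) c 0 using 1
  funext t
  simpa only [Finset.sum_apply] using eq_sum_smul_pointTransfer (hr t) 0

end Range

end Tabloid

theorem infinite_partial_profiles_with_prescribed_results_general {K ι : Type*} [Field K]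
    [Infinite K] {n m : ℕ} (hn : (n : K) ≠ 0) {lam : Fin m → ℕ} (hlam : ∀ i, 1 ≤ lam i)
    (hsum : ∑ i, lam i = n) {w : ι → Fin m → K} (hw : LinearIndependent K w)
    (hw₀ : ∀ t, ∑ i, (lam i : K) * w t i = 0) {r : ι → Fin n → K} (hr : ∀ t, ∑ c, r t c = 0) :
    {p : Tabloid n m lam → K |
      ∀ t c, ∑ g : Tabloid n m lam, p g * w t (g.1 c) = r t c}.Infinite := by
  have : Nonempty (Tabloid n m lam) := Tabloid.nonempty_of_sum_eq hsum
  obtain ⟨p, rfl⟩ := Tabloid.mem_range_results hn hlam hsum hw hw₀ hr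
  simpa only [funext_iff, Tabloid.results_apply] using
    infinite_setOf_map_eq (Tabloid.results lam w) one_ne_zero (Tabloid.results_one hn hw₀) p

/-- Let `λ : Fin m → ℕ` be a partition of `n ≥ 2`, and let
`w₁, …, w_k : Fin m → ℚ` be linearly independent weighting vectors with
`Σ_i λ(i)·w_t(i) = 0` for each `t`.  Then for any sum-zero results vectors
`r₁, …, r_k : Fin n → ℚ`, there are infinitely many profiles `p` of shape `λ`
with `T_{w_t}(p) = r_t` for every `t`. -/
theorem infinite_partial_profiles_with_prescribed_results (n m k : ℕ) (hn : 2 ≤ n)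
    (lam : Fin m → ℕ) (hlam1 : ∀ i, 1 ≤ lam i) (hlam2 : Antitone lam)
    (hlam3 : ∑ i, lam i = n)
    (w : Fin k → (Fin m → ℚ)) (hw : LinearIndependent ℚ w)
    (hw0 : ∀ t, ∑ i, (lam i : ℚ) * w t i = 0)
    (r : Fin k → (Fin n → ℚ)) (hr0 : ∀ t, ∑ c, r t c = 0) :
    {p : Tabloid n m lam → ℚ |
      ∀ t : Fin k, ∀ c : Fin n,
        ∑ g : Tabloid n m lam, p g * w t (g.1 c) = r t c}.Infinite :=
  infinite_partial_profiles_with_prescribed_results_general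
    (Nat.cast_ne_zero.mpr (by omega)) hlam1 hlam3 hw hw0 hr0
end

section
/- Let n ≥ 2 and let w, x : Fin n → ℚ be nonzero sum-zero weighting vectors that are not scalar multiples of one another (there is no rational γ with x = γ·w). Then the effective spaces of T_w and T_x intersect trivially: the ℚ-submodule of the profile space Equiv.Perm (Fin n) → ℚ spanned by the row functions {σ ↦ w(σ⁻¹(c)) : c ∈ Fin n} meets the submodule spanned by {σ ↦ x(σ⁻¹(c)) : c ∈ Fin n} only in the zero function. -/
/-!
Composing a ranking with the transposition of positions `i` and `j` changes the value of the row
combination `∑ c, a c • r_c(w)` at `σ` by `(a (σ i) - a (σ j)) • (w i - w j)`. Hence two equal row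
combinations satisfy `(a c - a d) • (w i - w j) = (b c - b d) • (x i - x j)` for all candidates
`c, d` and positions `i, j`. For fixed `c, d` with `b c ≠ b d` this makes `x` a multiple of `w` up
to a constant vector, and that constant vanishes when `w` and `x` are sum-zero and the number of
candidates is invertible; so `b` is constant, and the common value of the two combinations is a
multiple of `∑ i, x i = 0`.
-/

section Ring

variable {ι R M : Type*} [Ring R] [AddCommGroup M] [Module R M]

variable (R) in
/-- The effective space of the positional voting map with weighting vector `w`, given as its row
space: the span of the functions `σ ↦ w (σ⁻¹ c)`, one for each candidate `c`. Weights may take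
values in any `R`-module. -/
def effectiveSpace (w : ι → M) : Submodule R (Equiv.Perm ι → M) :=
  Submodule.span R (Set.range fun c : ι => fun σ : Equiv.Perm ι => w (σ⁻¹ c))

variable [Fintype ι]

theorem mem_effectiveSpace_iff {w : ι → M} {f : Equiv.Perm ι → M} :
    f ∈ effectiveSpace R w ↔ ∃ a : ι → R, ∀ σ, ∑ k, a (σ k) • w k = f σ := by
  have sum_rows_apply (a : ι → R) (σ : Equiv.Perm ι) :
      (∑ c, a c • fun τ : Equiv.Perm ι => w (τ⁻¹ c)) σ = ∑ k, a (σ k) • w k := by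
    rw [Finset.sum_apply, ← Equiv.sum_comp σ]
    simp
  simp only [effectiveSpace, Submodule.mem_span_range_iff_exists_fun, funext_iff, sum_rows_apply]

theorem sum_smul_sub_sum_mul_swap_smul [DecidableEq ι] (a : ι → R) (w : ι → M)
    (σ : Equiv.Perm ι) (i j : ι) :
    ∑ k, a (σ k) • w k - ∑ k, a ((σ * Equiv.swap i j) k) • w k =
      (a (σ i) - a (σ j)) • (w i - w j) := by
  obtain rfl | hij := eq_or_ne i j
  · simp
  rw [← Finset.sum_sub_distrib, Fintype.sum_eq_add i j hij]
  · simp only [Equiv.Perm.mul_apply, Equiv.swap_apply_left, Equiv.swap_apply_right, sub_smul,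
      smul_sub]
    abel
  · rintro k ⟨hki, hkj⟩
    simp [Equiv.swap_apply_of_ne_of_ne hki hkj]

theorem sub_smul_sub_eq_of_forall_sum_smul_eq {a b : ι → R} {w x : ι → M}
    (h : ∀ σ : Equiv.Perm ι, ∑ k, a (σ k) • w k = ∑ k, b (σ k) • x k) (c d i j : ι) :
    (a c - a d) • (w i - w j) = (b c - b d) • (x i - x j) := by
  classical
  obtain rfl | hcd := eq_or_ne c d
  · simp
  obtain rfl | hij := eq_or_ne i j
  · simp
  obtain ⟨σ, rfl, rfl⟩ : ∃ σ : Equiv.Perm ι, σ i = c ∧ σ j = d :=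
    MulAction.is_two_pretransitive_iff.mp (Equiv.Perm.isMultiplyPretransitive ι 2) hij hcd
  rw [← sum_smul_sub_sum_mul_swap_smul, ← sum_smul_sub_sum_mul_swap_smul, h, h]

theorem sum_smul_eq_zero_of_forall_eq {b : ι → R} {x : ι → M} (hb : ∀ c d, b c = b d)
    (hx : ∑ i, x i = 0) : ∑ i, b i • x i = 0 := by
  cases isEmpty_or_nonempty ι with
  | inl _ => simp
  | inr hι =>
    obtain ⟨c⟩ := hι
    simp only [hb _ c, ← Finset.smul_sum, hx, smul_zero]

theorem disjoint_effectiveSpace_of_smul_eq_smul_add_const {w x : ι → M} (hx : ∑ i, x i = 0)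
    (h : ∀ (α β : R) (m : M), β • x = α • w + Function.const ι m → β = 0) :
    Disjoint (effectiveSpace R w) (effectiveSpace R x) := by
  rw [Submodule.disjoint_def]
  intro f hfw hfx
  obtain ⟨a, ha⟩ := mem_effectiveSpace_iff.mp hfw
  obtain ⟨b, hb⟩ := mem_effectiveSpace_iff.mp hfx
  have b_const (c d : ι) : b c = b d := by
    refine sub_eq_zero.mp (h (a c - a d) _ ((b c - b d) • x c - (a c - a d) • w c) ?_)
    funext i
    have key := sub_smul_sub_eq_of_forall_sum_smul_eq (fun σ => (ha σ).trans (hb σ).symm) c d i c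
    rw [smul_sub, smul_sub, sub_eq_sub_iff_add_eq_add] at key
    simp only [Pi.smul_apply, Pi.add_apply, Function.const_apply]
    rw [← add_sub_assoc, key, add_sub_cancel_right]
  funext σ
  rw [← hb σ]
  exact sum_smul_eq_zero_of_forall_eq (fun _ _ => b_const _ _) hx

end Ring

section DivisionRing

variable {ι K V : Type*} [Fintype ι] [DivisionRing K] [AddCommGroup V] [Module K V]

theorem eq_zero_of_eq_add_const_of_sum_eq (hcard : (Fintype.card ι : K) ≠ 0) {u v : ι → V}
    {m : V} (h : u = v + Function.const ι m) (hsum : ∑ i, u i = ∑ i, v i) : m = 0 := by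
  have card_smul : (Fintype.card ι : K) • m = 0 := by
    simpa [h, Finset.sum_add_distrib, Nat.cast_smul_eq_nsmul] using hsum
  exact (smul_eq_zero.mp card_smul).resolve_left hcard

theorem effective_spaces_intersect_trivially_general (hcard : (Fintype.card ι : K) ≠ 0)
    {w x : ι → V} (hw : ∑ i, w i = 0) (hx : ∑ i, x i = 0) (hwx : ¬ ∃ γ : K, x = γ • w) :
    Disjoint (effectiveSpace K w) (effectiveSpace K x) := by
  refine disjoint_effectiveSpace_of_smul_eq_smul_add_const hx fun α β m h => ?_
  have m_eq_zero : m = 0 := eq_zero_of_eq_add_const_of_sum_eq hcard h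
    (by simp [← Finset.smul_sum, hw, hx])
  have smul_eq : β • x = α • w := by simpa [m_eq_zero] using h
  by_contra hβ
  exact hwx ⟨β⁻¹ * α, by rw [mul_smul, ← smul_eq, inv_smul_smul₀ hβ]⟩

end DivisionRing

/-- For `n ≥ 2` and nonzero sum-zero weighting vectors `w, x`
that are not scalar multiples of one another, the effective spaces of `T_w` and
`T_x` — i.e. the spans of the row functions `σ ↦ w(σ⁻¹ c)` resp. `σ ↦ x(σ⁻¹ c)`
in the profile space — intersect only in the zero function. -/
theorem effective_spaces_intersect_trivially (n : ℕ) (hn : 2 ≤ n)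
    (w x : Fin n → ℚ) (hw : w ≠ 0) (hx : x ≠ 0)
    (hw0 : ∑ c, w c = 0) (hx0 : ∑ c, x c = 0)
    (hind : ¬ ∃ γ : ℚ, x = γ • w) :
    Submodule.span ℚ
        (Set.range fun c : Fin n => fun σ : Equiv.Perm (Fin n) => w (σ⁻¹ c)) ⊓
      Submodule.span ℚ
        (Set.range fun c : Fin n => fun σ : Equiv.Perm (Fin n) => x (σ⁻¹ c)) = ⊥ := by
  have hcard : (Fintype.card (Fin n) : ℚ) ≠ 0 := by rw [Fintype.card_fin]; positivity
  exact (effective_spaces_intersect_trivially_general hcard hw0 hx0 hind).eq_bot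
end

section
/- Let n ≥ 2, let w, x : Fin n → ℚ be weighting vectors with x sum-zero, and let c, d ∈ Fin n with c ≠ d. Then Σ_{σ ∈ Equiv.Perm (Fin n)} w(σ⁻¹(c))·x(σ⁻¹(d)) = −(n−2)!·(Σ_{i} w(i)·x(i)). In other words, the dot product of the rows r_c(w) and r_d(x) equals −(n−2)! times the dot product of w and x. -/
/-!
As `σ` runs through the permutations, the pair `(σ⁻¹ c, σ⁻¹ d)` takes every ordered pair of distinct
positions equally often: `(n - 2)!` times each, by orbit-stabilizer for the transitive action of the
permutations on injections. So the dot product of the two rows is `(n - 2)!` times the sum of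
`w i * x j` over `i ≠ j`, which is `(∑ i, w i) * (∑ j, x j) - ∑ i, w i * x i`;
the first term vanishes when `x` is sum-zero.
-/

section Transitive

open MulAction

variable {G X : Type*} [Group G] [MulAction G X] [IsPretransitive G X]

theorem card_smul_eq_eq_card_stabilizer (x y : X) :
    Nat.card {g : G // g • x = y} = Nat.card (stabilizer G x) := by
  obtain ⟨h, rfl⟩ := exists_smul_eq G x y
  refine Nat.card_congr ((Equiv.mulLeft h⁻¹).subtypeEquiv fun g => ?_)
  simp only [Equiv.coe_mulLeft, mem_stabilizer_iff, mul_smul, inv_smul_eq_iff]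

theorem sum_smul_eq_card_stabilizer_nsmul_sum [Fintype G] [Fintype X] {M : Type*}
    [AddCommMonoid M] (f : X → M) (x : X) :
    ∑ g : G, f (g • x) = Nat.card (stabilizer G x) • ∑ y, f y := by
  classical
  calc ∑ g : G, f (g • x)
      = ∑ y, Nat.card {g : G // g • x = y} • f y := by
        simp only [← Finset.sum_fiberwise' Finset.univ (fun g : G => g • x) f, Finset.sum_const,
          Nat.card_eq_fintype_card, Fintype.card_subtype]
    _ = Nat.card (stabilizer G x) • ∑ y, f y := by
        simp only [card_smul_eq_eq_card_stabilizer, Finset.smul_sum]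

end Transitive

section Perm

open MulAction

variable {ι α : Type*}

instance isPretransitive_perm_embedding [Finite ι] : IsPretransitive (Equiv.Perm α) (ι ↪ α) :=
  ⟨Equiv.Perm.exists_smul_eq_embedding⟩

variable [Fintype α] {M : Type*} [AddCommMonoid M]

theorem card_stabilizer_perm_embedding [Fintype ι] (e : ι ↪ α) :
    Nat.card (stabilizer (Equiv.Perm α) e) = (Fintype.card α - Fintype.card ι).factorial := by
  classical
  have card_le : Fintype.card ι ≤ Fintype.card α := Fintype.card_le_of_embedding e
  have orbit_stabilizer :
      (Fintype.card α).descFactorial (Fintype.card ι) * Nat.card (stabilizer (Equiv.Perm α) e) =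
        (Fintype.card α).factorial := by
    rw [← Fintype.card_embedding_eq, ← Nat.card_eq_fintype_card (α := ι ↪ α),
      ← index_stabilizer_of_transitive (Equiv.Perm α) e, Subgroup.index_mul_card,
      Nat.card_perm, Nat.card_eq_fintype_card]
  refine Nat.eq_of_mul_eq_mul_left (Nat.descFactorial_pos.2 card_le) ?_
  rw [orbit_stabilizer, mul_comm, Nat.factorial_mul_descFactorial card_le]

theorem sum_embedding_fin_two_eq_sum_offDiag (f : α → α → M) :
    ∑ e : Fin 2 ↪ α, f (e 0) (e 1) =
      ∑ p ∈ (Finset.univ : Finset α).offDiag, f p.1 p.2 := by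
  classical
  rw [Finset.sum_subtype _ (p := (· ∈ {(a, b) : α × α | a ≠ b})) (by simp)]
  exact Fintype.sum_equiv Function.Embedding.twoEmbeddingEquiv _ _ fun _ => rfl

theorem sum_perm_apply_apply_eq_factorial_nsmul_sum_offDiag [DecidableEq α] (f : α → α → M)
    {c d : α} (hcd : c ≠ d) :
    ∑ σ : Equiv.Perm α, f (σ c) (σ d) =
      (Fintype.card α - 2).factorial • ∑ p ∈ (Finset.univ : Finset α).offDiag, f p.1 p.2 := by
  let e := Function.Embedding.embFinTwo hcd
  calc ∑ σ : Equiv.Perm α, f (σ c) (σ d)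
      = ∑ σ : Equiv.Perm α, f ((σ • e) 0) ((σ • e) 1) := rfl
    _ = Nat.card (stabilizer (Equiv.Perm α) e) • ∑ e' : Fin 2 ↪ α, f (e' 0) (e' 1) :=
        sum_smul_eq_card_stabilizer_nsmul_sum (fun e' : Fin 2 ↪ α => f (e' 0) (e' 1)) e
    _ = (Fintype.card α - 2).factorial • ∑ p ∈ (Finset.univ : Finset α).offDiag, f p.1 p.2 := by
        rw [card_stabilizer_perm_embedding, Fintype.card_fin, sum_embedding_fin_two_eq_sum_offDiag]

end Perm

section Ring

variable {α R : Type*} [Fintype α]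

theorem sum_offDiag_mul_eq_sub [NonUnitalNonAssocRing R] (w x : α → R) :
    ∑ p ∈ (Finset.univ : Finset α).offDiag, w p.1 * x p.2 =
      (∑ i, w i) * (∑ i, x i) - ∑ i, w i * x i := by
  classical
  rw [eq_sub_iff_add_eq', Finset.sum_mul_sum, ← Finset.sum_product',
    ← Finset.diag_union_offDiag, Finset.sum_union (Finset.disjoint_diag_offDiag _),
    Finset.sum_diag]

theorem row_dot_row_distinct_candidates_general [DecidableEq α] [NonAssocRing R]
    (w x : α → R) {c d : α} (hcd : c ≠ d) :
    ∑ σ : Equiv.Perm α, w (σ⁻¹ c) * x (σ⁻¹ d) =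
      ((Fintype.card α - 2).factorial : R) * ((∑ i, w i) * (∑ i, x i) - ∑ i, w i * x i) := by
  calc ∑ σ : Equiv.Perm α, w (σ⁻¹ c) * x (σ⁻¹ d)
      = ∑ σ : Equiv.Perm α, w (σ c) * x (σ d) :=
        Equiv.sum_comp (Equiv.inv _) fun σ : Equiv.Perm α => w (σ c) * x (σ d)
    _ = (Fintype.card α - 2).factorial •
          ∑ p ∈ (Finset.univ : Finset α).offDiag, w p.1 * x p.2 :=
        sum_perm_apply_apply_eq_factorial_nsmul_sum_offDiag (fun i j => w i * x j) hcd
    _ = ((Fintype.card α - 2).factorial : R) * ((∑ i, w i) * (∑ i, x i) - ∑ i, w i * x i) := by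
        rw [sum_offDiag_mul_eq_sub, nsmul_eq_mul]

end Ring

/-- For `n ≥ 2`, weighting vectors `w, x : Fin n → ℚ` with `x`
sum-zero, and distinct candidates `c ≠ d`, the dot product of the rows `r_c(w)`
and `r_d(x)` equals `−(n−2)!` times the dot product of `w` and `x`. -/
theorem row_dot_row_distinct_candidates (n : ℕ) (hn : 2 ≤ n)
    (w x : Fin n → ℚ) (hx0 : ∑ i, x i = 0)
    (c d : Fin n) (hcd : c ≠ d) :
    ∑ σ : Equiv.Perm (Fin n), w (σ⁻¹ c) * x (σ⁻¹ d) =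
      -((n - 2).factorial : ℚ) * ∑ i, w i * x i := by
  rw [row_dot_row_distinct_candidates_general w x hcd, hx0, Fintype.card_fin]
  ring
end

section
/- Let n ≥ 2 and let w, x : Fin n → ℚ be nonzero sum-zero weighting vectors. Then the effective spaces of T_w and T_x are orthogonal if and only if w and x are orthogonal; concretely: (∀ c d ∈ Fin n, Σ_{σ ∈ Equiv.Perm (Fin n)} w(σ⁻¹(c))·x(σ⁻¹(d)) = 0) if and only if Σ_i w(i)·x(i) = 0. -/
/-!
Relabelling the candidates by a permutation leaves the dot products `⟨r_c(w), r_d(x)⟩` unchanged,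
so they take one value `a` on the diagonal `c = d` and one value `b` off it. Summing along the
diagonal gives `n a = n! ⟨w, x⟩`. Summing along a row gives `a + (n - 1) b`, which vanishes
because `x` is sum-zero. Hence `a` and `b` both vanish exactly when `⟨w, x⟩` does.
-/

open Finset Equiv
open scoped Nat

section RowDot

variable {ι R : Type*} [Fintype ι] [DecidableEq ι] [NonUnitalNonAssocSemiring R]

/-- The dot product `⟨r_c(w), r_d(x)⟩` over all full rankings of the row functions
`r_c(w)(σ) = w (σ⁻¹ c)` and `r_d(x)(σ) = x (σ⁻¹ d)`, which span the effective spaces of the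
positional voting maps `T_w` and `T_x`. A ranking is encoded as the permutation sending each
position to the candidate placed there. -/
def rowDot (w x : ι → R) (c d : ι) : R :=
  ∑ σ : Perm ι, w (σ⁻¹ c) * x (σ⁻¹ d)

theorem rowDot_perm_apply (w x : ι → R) (τ : Perm ι) (c d : ι) :
    rowDot w x (τ c) (τ d) = rowDot w x c d :=
  Fintype.sum_equiv (Equiv.mulLeft τ⁻¹) _ _ fun σ => by simp

theorem rowDot_self_eq_rowDot_self (w x : ι → R) (b c : ι) :
    rowDot w x b b = rowDot w x c c := by
  simpa only [swap_apply_left] using rowDot_perm_apply w x (swap c b) c c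

theorem rowDot_eq_rowDot_of_ne (w x : ι → R) {b c d : ι} (hbc : b ≠ c) (hdc : d ≠ c) :
    rowDot w x c b = rowDot w x c d := by
  simpa only [swap_apply_left, swap_apply_of_ne_of_ne hdc.symm hbc.symm] using
    rowDot_perm_apply w x (swap d b) c d

theorem sum_rowDot_self (w x : ι → R) :
    ∑ c, rowDot w x c c = (Fintype.card ι)! • ∑ i, w i * x i :=
  calc ∑ c, rowDot w x c c
      = ∑ σ : Perm ι, ∑ c, w (σ⁻¹ c) * x (σ⁻¹ c) := sum_comm
    _ = ∑ _σ : Perm ι, ∑ i, w i * x i :=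
        sum_congr rfl fun σ _ => Equiv.sum_comp σ⁻¹ fun i => w i * x i
    _ = (Fintype.card ι)! • ∑ i, w i * x i := by
        rw [sum_const, card_univ, Fintype.card_perm]

theorem sum_rowDot_right (w x : ι → R) (c : ι) :
    ∑ d, rowDot w x c d = (∑ σ : Perm ι, w (σ⁻¹ c)) * ∑ i, x i :=
  calc ∑ d, rowDot w x c d
      = ∑ σ : Perm ι, ∑ d, w (σ⁻¹ c) * x (σ⁻¹ d) := sum_comm
    _ = ∑ σ : Perm ι, w (σ⁻¹ c) * ∑ i, x i :=
        sum_congr rfl fun σ _ => by rw [← mul_sum, Equiv.sum_comp σ⁻¹ x]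
    _ = (∑ σ : Perm ι, w (σ⁻¹ c)) * ∑ i, x i := (sum_mul ..).symm

theorem card_nsmul_rowDot_self (w x : ι → R) (c : ι) :
    Fintype.card ι • rowDot w x c c = (Fintype.card ι)! • ∑ i, w i * x i := by
  rw [← sum_rowDot_self, ← card_univ, ← sum_const]
  exact sum_congr rfl fun b _ => rowDot_self_eq_rowDot_self w x c b

theorem rowDot_self_add_nsmul_rowDot (w x : ι → R) {c d : ι} (hdc : d ≠ c) :
    rowDot w x c c + (Fintype.card ι - 1) • rowDot w x c d =
      (∑ σ : Perm ι, w (σ⁻¹ c)) * ∑ i, x i := by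
  have off_diagonal : ∑ b ∈ univ.erase c, rowDot w x c b =
      (Fintype.card ι - 1) • rowDot w x c d := by
    rw [← card_univ, ← card_erase_of_mem (mem_univ c), ← sum_const]
    exact sum_congr rfl fun b hb => rowDot_eq_rowDot_of_ne w x (ne_of_mem_erase hb) hdc
  rw [← sum_rowDot_right, ← off_diagonal, add_sum_erase _ _ (mem_univ c)]

variable [IsAddTorsionFree R]

theorem rowDot_self_eq_zero_iff (w x : ι → R) (c : ι) :
    rowDot w x c c = 0 ↔ ∑ i, w i * x i = 0 := by
  have card_ne_zero : Fintype.card ι ≠ 0 := (Fintype.card_pos_iff.mpr ⟨c⟩).ne'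
  rw [← nsmul_eq_zero_iff_right card_ne_zero, card_nsmul_rowDot_self,
    nsmul_eq_zero_iff_right (Nat.factorial_ne_zero _)]

theorem rowDot_eq_zero_of_rowDot_self_eq_zero {w x : ι → R} (hx0 : ∑ i, x i = 0) {c : ι}
    (hc : rowDot w x c c = 0) (d : ι) : rowDot w x c d = 0 := by
  obtain rfl | hdc := eq_or_ne d c
  · exact hc
  have one_lt_card : 1 < Fintype.card ι := Fintype.one_lt_card_iff.mpr ⟨d, c, hdc⟩
  have row_sum := rowDot_self_add_nsmul_rowDot w x hdc
  rw [hc, zero_add, hx0, mul_zero] at row_sum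
  exact (nsmul_eq_zero_iff_right (Nat.sub_ne_zero_of_lt one_lt_card)).mp row_sum

theorem effective_spaces_orthogonal_iff_general (w x : ι → R) (hx0 : ∑ i, x i = 0) :
    (∀ c d : ι, rowDot w x c d = 0) ↔ ∑ i, w i * x i = 0 := by
  constructor
  · intro h
    cases isEmpty_or_nonempty ι with
    | inl _ => exact Fintype.sum_empty _
    | inr hι => exact hι.elim fun c => (rowDot_self_eq_zero_iff w x c).mp (h c c)
  · intro h c
    exact rowDot_eq_zero_of_rowDot_self_eq_zero hx0 ((rowDot_self_eq_zero_iff w x c).mpr h)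

end RowDot

/-- For `n ≥ 2` and nonzero sum-zero weighting vectors `w, x`,
the effective spaces of `T_w` and `T_x` are orthogonal (all pairwise dot
products of row functions vanish) if and only if `w` and `x` are orthogonal. -/
theorem effective_spaces_orthogonal_iff (n : ℕ) (hn : 2 ≤ n)
    (w x : Fin n → ℚ) (hw : w ≠ 0) (hx : x ≠ 0)
    (hw0 : ∑ i, w i = 0) (hx0 : ∑ i, x i = 0) :
    (∀ c d : Fin n, ∑ σ : Equiv.Perm (Fin n), w (σ⁻¹ c) * x (σ⁻¹ d) = 0) ↔
      ∑ i, w i * x i = 0 :=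
  effective_spaces_orthogonal_iff_general w x hx0
end

section
/- Let n ≥ 2 and let b : Fin n → ℚ be the Borda weighting vector b(j) = n − 1 − j. Then the Borda count is recoverable from the pairs map by summing victories: for every full-ranking profile p : Equiv.Perm (Fin n) → ℚ and every candidate c, T_b(p)(c) = Σ_{d ≠ c} P(p)(c, d). -/
/-!
Fix a ballot. The candidate in position `k` is ranked above exactly `n - 1 - k` others, so its
Borda score on that ballot is its number of pairwise victories. Weighting the ballots and exchanging
the sum over ballots with the sum over opponents gives the identity.
-/

section PairwiseVictories

open Finset

variable {ι α : Type*} [Fintype ι] [Fintype α]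

theorem sum_ne_sum_rank_lt_eq_sum_card_nsmul {β M : Type*} [DecidableEq α] [Preorder β]
    [DecidableLT β] [AddCommMonoid M] (rank : ι → α → β) (p : ι → M) (c : α) :
    ∑ d with d ≠ c, ∑ i with rank i c < rank i d, p i =
      ∑ i, #{d | rank i c < rank i d} • p i := by
  have ne_of_rank_lt {i : ι} {d : α} (h : rank i c < rank i d) : d ≠ c :=
    fun hdc => h.ne' (congrArg (rank i) hdc)
  calc ∑ d with d ≠ c, ∑ i with rank i c < rank i d, p i
      = ∑ i, ∑ d with rank i c < rank i d, p i :=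
        sum_comm' fun d i => by simpa using ne_of_rank_lt
    _ = ∑ i, #{d | rank i c < rank i d} • p i :=
        sum_congr rfl fun i _ => sum_const (p i)

theorem card_filter_rank_lt {n : ℕ} (rank : α ≃ Fin n) (c : α) :
    #{d | rank c < rank d} = n - 1 - (rank c : ℕ) :=
  calc #{d | rank c < rank d} = #(Ioi (rank c)) := card_equiv rank (by simp)
    _ = n - 1 - (rank c : ℕ) := Fin.card_Ioi (rank c)

theorem cast_card_filter_rank_lt {R : Type*} [AddGroupWithOne R] {n : ℕ} (rank : α ≃ Fin n)
    (c : α) : (#{d | rank c < rank d} : R) = n - 1 - (rank c : ℕ) := by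
  have one_le : 1 ≤ n := (rank c).pos
  have rank_le : (rank c : ℕ) ≤ n - 1 := Nat.le_sub_one_of_lt (rank c).isLt
  rw [card_filter_rank_lt, Nat.cast_sub rank_le, Nat.cast_sub one_le, Nat.cast_one]

theorem borda_recoverable_from_pairs_general {R : Type*} [NonAssocRing R] [DecidableEq α] {n : ℕ}
    (rank : ι → α ≃ Fin n) (p : ι → R) (c : α) :
    ∑ i, p i * ((n : R) - 1 - (rank i c : ℕ)) =
      ∑ d with d ≠ c, ∑ i with rank i c < rank i d, p i := by
  simp only [sum_ne_sum_rank_lt_eq_sum_card_nsmul (fun i => rank i), nsmul_eq_mul',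
    cast_card_filter_rank_lt]

end PairwiseVictories

/-- For `n ≥ 2` and the Borda weighting vector
`b(j) = n − 1 − j`, the Borda outcome of every full-ranking profile `p` is
recovered from the pairs map by summing victories:
`T_b(p)(c) = Σ_{d ≠ c} P(p)(c, d)`. -/
theorem borda_recoverable_from_pairs (n : ℕ) (hn : 2 ≤ n)
    (p : Equiv.Perm (Fin n) → ℚ) (c : Fin n) :
    ∑ σ : Equiv.Perm (Fin n), p σ * ((n : ℚ) - 1 - ((σ⁻¹ c : Fin n) : ℕ)) =
      ∑ d ∈ Finset.univ.filter (fun d : Fin n => d ≠ c),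
        ∑ σ ∈ Finset.univ.filter (fun σ : Equiv.Perm (Fin n) => σ⁻¹ c < σ⁻¹ d), p σ :=
  borda_recoverable_from_pairs_general (fun σ => σ⁻¹) p c
end

section
/- Let n ≥ 2 and let U be the ℚ-subspace of Fin n → ℚ consisting of sum-zero vectors. For every ℚ-linear map T : U → U there exists an element a : Equiv.Perm (Fin n) → ℚ of the rational group algebra of S_n such that for every u ∈ U and every c ∈ Fin n, (T u)(c) = Σ_{σ ∈ Equiv.Perm (Fin n)} a(σ)·u(σ⁻¹(c)). (This is the instance, for the simple module S^{(n−1,1)}, of Burnside's theorem that every linear endomorphism of a simple ℚS_n-module is realized by the action of some element of ℚS_n.) -/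
/-!
If `n = |ι|` is invertible, an endomorphism `T` of the sum-zero vectors extends to all of `ι → R` by
sending the constant vectors to `0`. All row sums and column sums of the matrix of this extension
vanish, so the matrix is a combination of the rank-one matrices `(eᵢ - eⱼ)(eₖ - eₗ)ᵀ`. Each of
those is the difference of two permutation matrices: take `σ` with `σ i = k` and `σ j = l`, and
subtract `σ * swap i j`, which differs from `σ` only in the rows `i` and `j`.
-/

open Matrix

variable {ι R : Type*}

lemma permMatrix_sub_permMatrix_mul_swap [Ring R] [DecidableEq ι] (σ : Equiv.Perm ι) (i j : ι) :
    σ.permMatrix R - (σ * Equiv.swap i j).permMatrix R =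
      vecMulVec (Pi.single i 1 - Pi.single j 1) (Pi.single (σ i) 1 - Pi.single (σ j) 1) := by
  rcases eq_or_ne i j with rfl | hij
  · rw [Equiv.swap_self, ← Equiv.Perm.one_def, mul_one, sub_self, sub_self, zero_vecMulVec]
  ext k l
  rcases eq_or_ne k i with rfl | hki
  · simp [vecMulVec_apply, PEquiv.toMatrix_apply, Pi.single_apply, hij, eq_comm]
  rcases eq_or_ne k j with rfl | hkj
  · simp [vecMulVec_apply, PEquiv.toMatrix_apply, Pi.single_apply, hki, eq_comm]
  · simp [vecMulVec_apply, PEquiv.toMatrix_apply, Equiv.swap_apply_of_ne_of_ne hki hkj, hki, hkj]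

lemma vecMulVec_single_sub_single_mem_span_permMatrix [Ring R] [DecidableEq ι] (i j k l : ι) :
    vecMulVec (Pi.single i 1 - Pi.single j 1) (Pi.single k 1 - Pi.single l 1) ∈
      Submodule.span R (Set.range fun σ : Equiv.Perm ι ↦ σ.permMatrix R) := by
  rcases eq_or_ne i j with rfl | hij
  · simp
  rcases eq_or_ne k l with rfl | hkl
  · simp
  obtain ⟨σ, rfl, rfl⟩ : ∃ σ : Equiv.Perm ι, σ i = k ∧ σ j = l :=
    MulAction.is_two_pretransitive_iff.mp (Equiv.Perm.isMultiplyPretransitive ι 2) hij hkl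
  rw [← permMatrix_sub_permMatrix_mul_swap]
  exact sub_mem (Submodule.subset_span ⟨σ, rfl⟩) (Submodule.subset_span ⟨_, rfl⟩)

lemma eq_sum_smul_vecMulVec_of_sum_eq_zero {κ : Type*} [Ring R] [Fintype ι] [DecidableEq ι]
    [Fintype κ] [DecidableEq κ] {M : Matrix ι κ R}
    (hrow : ∀ i, ∑ j, M i j = 0) (hcol : ∀ j, ∑ i, M i j = 0) (i₀ : ι) (j₀ : κ) :
    M = ∑ i, ∑ j, M i j •
      vecMulVec (Pi.single i 1 - Pi.single i₀ 1) (Pi.single j 1 - Pi.single j₀ 1) := by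
  ext k l
  simp [Matrix.sum_apply, vecMulVec_apply, mul_sub, Pi.single_apply, Finset.sum_sub_distrib,
    hrow, hcol]

lemma mem_span_permMatrix_of_sum_eq_zero [Ring R] [Fintype ι] [DecidableEq ι] {M : Matrix ι ι R}
    (hrow : ∀ i, ∑ j, M i j = 0) (hcol : ∀ j, ∑ i, M i j = 0) :
    M ∈ Submodule.span R (Set.range fun σ : Equiv.Perm ι ↦ σ.permMatrix R) := by
  rcases isEmpty_or_nonempty ι with _ | ⟨⟨o⟩⟩
  · simp [Subsingleton.elim M 0]
  rw [eq_sum_smul_vecMulVec_of_sum_eq_zero hrow hcol o o]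
  exact sum_mem fun i _ ↦ sum_mem fun j _ ↦
    Submodule.smul_mem _ _ (vecMulVec_single_sub_single_mem_span_permMatrix i o j o)

lemma exists_extend_map_one_eq_zero [Ring R] [Fintype ι] {V : Type*} [AddCommGroup V] [Module R V]
    {U : Submodule R (ι → R)} (hU : ∀ v, v ∈ U ↔ ∑ c, v c = 0)
    (hcard : IsUnit (Fintype.card ι : R)) (T : U →ₗ[R] V) :
    ∃ T' : (ι → R) →ₗ[R] V, T' 1 = 0 ∧ ∀ u : U, T' u = T u := by
  obtain ⟨r, hr⟩ := hcard.exists_right_inv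
  let subMean : (ι → R) →ₗ[R] (ι → R) :=
    LinearMap.id - (∑ c, LinearMap.proj c).smulRight fun _ ↦ r
  have subMean_apply v c : subMean v c = v c - (∑ d, v d) * r := by simp [subMean]
  have subMean_mem v : subMean v ∈ U := by
    rw [hU]
    simp only [subMean_apply, Finset.sum_sub_distrib, Finset.sum_const, Finset.card_univ]
    rw [← mul_smul_comm, nsmul_eq_mul, hr, mul_one, sub_self]
  have subMean_one : subMean 1 = 0 := by
    ext c
    simp [subMean_apply, hr]
  have subMean_coe (u : U) : subMean u = u := by
    ext c
    simp [subMean_apply, (hU u).mp u.2]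
  refine ⟨T ∘ₗ subMean.codRestrict U subMean_mem, ?_, fun u ↦ ?_⟩
  · rw [LinearMap.comp_apply, (Subtype.ext subMean_one : subMean.codRestrict U subMean_mem 1 = 0),
      map_zero]
  · exact congrArg T (Subtype.ext (subMean_coe u))

lemma exists_mulVec_eq_and_sum_eq_zero [CommRing R] [Fintype ι]
    {U : Submodule R (ι → R)} (hU : ∀ v, v ∈ U ↔ ∑ c, v c = 0)
    (hcard : IsUnit (Fintype.card ι : R)) (T : U →ₗ[R] U) :
    ∃ M : Matrix ι ι R, (∀ u : U, M *ᵥ u = T u) ∧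
      (∀ i, ∑ j, M i j = 0) ∧ ∀ j, ∑ i, M i j = 0 := by
  classical
  obtain ⟨T', map_one, map_coe⟩ := exists_extend_map_one_eq_zero hU hcard T
  refine ⟨(U.subtype ∘ₗ T').toMatrix', fun u ↦ ?_, fun i ↦ ?_, fun j ↦ ?_⟩
  · simp [LinearMap.toMatrix'_mulVec, map_coe]
  · simpa [mulVec, dotProduct, map_one] using
      congrFun (LinearMap.toMatrix'_mulVec (U.subtype ∘ₗ T') 1) i
  · simpa [LinearMap.toMatrix'_apply] using (hU _).mp (T' (Pi.single j 1)).2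

theorem endomorphism_realized_by_group_algebra_general [CommRing R] [Fintype ι]
    [DecidableEq ι] {U : Submodule R (ι → R)} (hU : ∀ v, v ∈ U ↔ ∑ c, v c = 0)
    (hcard : IsUnit (Fintype.card ι : R)) (T : U →ₗ[R] U) :
    ∃ a : Equiv.Perm ι → R, ∀ u : U, ∀ c : ι,
      (T u : ι → R) c = ∑ σ : Equiv.Perm ι, a σ * (u : ι → R) (σ⁻¹ c) := by
  obtain ⟨M, hM, hrow, hcol⟩ := exists_mulVec_eq_and_sum_eq_zero hU hcard T
  obtain ⟨b, rfl⟩ := (Submodule.mem_span_range_iff_exists_fun R).mp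
    (mem_span_permMatrix_of_sum_eq_zero hrow hcol)
  refine ⟨fun σ ↦ b σ⁻¹, fun u c ↦ ?_⟩
  calc (T u : ι → R) c = ∑ σ, b σ * (u : ι → R) (σ c) := by
        simp [← hM, Matrix.sum_mulVec, smul_mulVec, permMatrix_mulVec]
    _ = ∑ σ : Equiv.Perm ι, b σ⁻¹ * (u : ι → R) (σ⁻¹ c) :=
        (Equiv.sum_comp (Equiv.inv _) fun σ ↦ b σ * (u : ι → R) (σ c)).symm

/-- Burnside's theorem for the simple module `S^{(n−1,1)}`.
For `n ≥ 2`, every `ℚ`-linear endomorphism of the subspace `U` of sum-zero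
vectors in `Fin n → ℚ` is realized by the action of some element
`a : Equiv.Perm (Fin n) → ℚ` of the group algebra `ℚS_n`. -/
theorem endomorphism_realized_by_group_algebra (n : ℕ) (hn : 2 ≤ n)
    (U : Submodule ℚ (Fin n → ℚ)) (hU : ∀ v, v ∈ U ↔ ∑ c, v c = 0)
    (T : U →ₗ[ℚ] U) :
    ∃ a : Equiv.Perm (Fin n) → ℚ, ∀ u : U, ∀ c : Fin n,
      (T u : Fin n → ℚ) c =
        ∑ σ : Equiv.Perm (Fin n), a σ * (u : Fin n → ℚ) (σ⁻¹ c) := by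
  have hcard : IsUnit (Fintype.card (Fin n) : ℚ) := by simpa using Nat.ne_zero_of_lt hn
  exact endomorphism_realized_by_group_algebra_general hU hcard T
end

section
/- Let n ≥ 1, let b : Fin n → ℚ be the Borda weighting vector b(j) = n − 1 − j, and let ρ ∈ Equiv.Perm (Fin n) be the order-reversing permutation ρ(i) = n − 1 − i. The Borda count has reversal symmetry: for every full-ranking profile p : Equiv.Perm (Fin n) → ℚ, if q is the reversed profile defined by q(σ) = p(σ·ρ) (so that each ballot's ranking is completely reversed), then for every candidate c, T_b(q)(c) = (n − 1)·(Σ_σ p(σ)) − T_b(p)(c); in particular the sum-zero part of the results vector is negated, so the resulting ordinal ranking is the complete reversal of the original one. -/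
/-!
Reversing every ballot of a profile yields the same tally as keeping the ballots and reversing the
weighting vector. Reversing the Borda vector `b` replaces it by the constant vector `n - 1` minus
`b`, and the constant vector contributes `n - 1` times the total weight of the profile.
-/

section PositionalVoting

variable {α R : Type*} [Fintype α] [DecidableEq α]

/-- The positional voting map `T_w`: a ballot `σ` of the profile `p` gives the candidate `c` the
weight `w` of its position `σ⁻¹ c`. Positions and candidates share the index type `α`. -/
def positionalTally [NonUnitalNonAssocSemiring R] (w : α → R) (p : Equiv.Perm α → R) (c : α) : R :=
  ∑ σ : Equiv.Perm α, p σ * w (σ⁻¹ c)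

theorem positionalTally_mul_right [NonUnitalNonAssocSemiring R] (w : α → R)
    (p : Equiv.Perm α → R) (τ : Equiv.Perm α) (c : α) :
    positionalTally w (fun σ ↦ p (σ * τ)) c = positionalTally (w ∘ τ) p c :=
  Fintype.sum_equiv (Equiv.mulRight τ) _ _ fun σ ↦ by simp

theorem positionalTally_const_sub [NonUnitalNonAssocRing R] (k : R) (w : α → R)
    (p : Equiv.Perm α → R) (c : α) :
    positionalTally (fun i ↦ k - w i) p c = (∑ σ, p σ) * k - positionalTally w p c := by
  simp only [positionalTally, mul_sub, Finset.sum_sub_distrib, Finset.sum_mul]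

theorem borda_reversal_symmetry_general [NonUnitalNonAssocRing R] {k : R} {w : α → R}
    {τ : Equiv.Perm α} (hw : ∀ i, w (τ i) = k - w i) (p : Equiv.Perm α → R) (c : α) :
    positionalTally w (fun σ ↦ p (σ * τ)) c = (∑ σ, p σ) * k - positionalTally w p c :=
  calc
    positionalTally w (fun σ ↦ p (σ * τ)) c = positionalTally (w ∘ τ) p c :=
      positionalTally_mul_right w p τ c
    _ = positionalTally (fun i ↦ k - w i) p c := by rw [show w ∘ τ = fun i ↦ k - w i from funext hw]
    _ = (∑ σ, p σ) * k - positionalTally w p c := positionalTally_const_sub k w p c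

end PositionalVoting

/-- The Borda weighting vector on `n` positions. The subtraction takes place in `R`, so it is not
truncated. -/
def bordaWeight (R : Type*) [AddCommGroupWithOne R] (n : ℕ) (j : Fin n) : R :=
  (n : R) - 1 - (j : ℕ)

theorem bordaWeight_rev (R : Type*) [AddCommGroupWithOne R] {n : ℕ} (j : Fin n) :
    bordaWeight R n j.rev = (n : R) - 1 - bordaWeight R n j := by
  rw [bordaWeight, bordaWeight, Fin.val_rev, Nat.cast_sub j.isLt, Nat.cast_succ]
  abel

/-- reversal symmetry of the Borda count.  For `n ≥ 1`, the
Borda weighting vector `b(j) = n − 1 − j`, and the order-reversing permutation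
`ρ = Fin.revPerm` (`ρ(i) = n − 1 − i`), if `q(σ) = p(σ·ρ)` is the reversed
profile of `p`, then `T_b(q)(c) = (n − 1)·(Σ_σ p(σ)) − T_b(p)(c)` for every
candidate `c`. -/
theorem borda_reversal_symmetry (n : ℕ) (hn : 1 ≤ n)
    (p q : Equiv.Perm (Fin n) → ℚ)
    (hq : ∀ σ : Equiv.Perm (Fin n), q σ = p (σ * Fin.revPerm)) (c : Fin n) :
    ∑ σ : Equiv.Perm (Fin n), q σ * ((n : ℚ) - 1 - ((σ⁻¹ c : Fin n) : ℕ)) =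
      ((n : ℚ) - 1) * (∑ σ : Equiv.Perm (Fin n), p σ) -
        ∑ σ : Equiv.Perm (Fin n), p σ * ((n : ℚ) - 1 - ((σ⁻¹ c : Fin n) : ℕ)) := by
  rw [funext hq, mul_comm]
  exact borda_reversal_symmetry_general (τ := Fin.revPerm) (bordaWeight_rev ℚ) p c
end
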